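/- arXiv:2303.16872 — 2 statements merged into one kernel-verified Lean document; each statement's English description precedes it below -/
import Mathlib

section
/- For all real numbers x > 0, y > 0 and C > 0, one has C·log(1+x) ≤ x²/y + C·log(1+C·y). -/
/-! If `x ≤ C * y`, monotonicity of `log` suffices. Otherwise `log (1 + x) ≤ x` gives
`C * log (1 + x) ≤ C * x ≤ x ^ 2 / y`, and the remaining logarithm is nonnegative. -/

theorem log_one_add_le_sq_div_add_log_one_add_mul
    (x y C : ℝ) (hx : 0 < x) (hy : 0 < y) (hC : 0 < C) :
    C * Real.log (1 + x) ≤ x ^ 2 / y + C * Real.log (1 + C * y) := by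
  have hCy : 0 < C * y := mul_pos hC hy
  rcases le_total x (C * y) with h | h
  · have h1 : Real.log (1 + x) ≤ Real.log (1 + C * y) :=
      Real.log_le_log (by linarith) (by linarith)
    have h2 : 0 ≤ x ^ 2 / y := by positivity
    have h3 := mul_le_mul_of_nonneg_left h1 hC.le
    linarith
  · have h1 : Real.log (1 + x) ≤ x := by
      have := Real.log_le_sub_one_of_pos (show 0 < 1 + x by linarith)
      linarith
    have h2 : C * x ≤ x ^ 2 / y := by
      rw [le_div_iff₀ hy]
      nlinarith
    have h3 : 0 ≤ C * Real.log (1 + C * y) :=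
      mul_nonneg hC.le (Real.log_nonneg (by linarith))
    have h4 := mul_le_mul_of_nonneg_left h1 hC.le
    linarith
end

section
/- Let n be a positive natural number and let γ > 0, m ≥ 0, η ≥ 0, z ≥ 0 be real numbers. Then η·log(z+1) ≤ (γ/(2n))·exp(−γ·m)·z² + η·(1 + γ·m + log(η+1) + 2n/γ). -/
/-!
The bound `C log (1 + x) ≤ x² / y + C log (1 + C y)` is applied with `y = (2n/γ) exp (γm)`. The
remaining logarithm splits, since `1 + η y ≤ (η + 1) (1 + 2n/γ) exp (γm)`, and
`log (1 + 2n/γ) ≤ 2n/γ`.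
-/

/-- Either `x ≤ C * y`, and the logarithm on the right dominates, or `C < x / y`, and
`log (1 + x) ≤ x` gives the quadratic term. -/
lemma mul_log_le_sq_div_add {C x y : ℝ} (hC : 0 ≤ C) (hx : 0 ≤ x) (hy : 0 < y) :
    C * Real.log (x + 1) ≤ x ^ 2 / y + C * Real.log (1 + C * y) := by
  have hCy : 0 ≤ C * y := by positivity
  rcases le_total x (C * y) with h | h
  · have h1 : Real.log (x + 1) ≤ Real.log (1 + C * y) :=
      Real.log_le_log (by linarith) (by linarith)
    have h2 : 0 ≤ x ^ 2 / y := by positivity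
    linarith [mul_le_mul_of_nonneg_left h1 hC]
  · have h1 : Real.log (x + 1) ≤ x := by
      linarith [Real.log_le_sub_one_of_pos (show 0 < x + 1 by linarith)]
    have h2 : C * x ≤ x ^ 2 / y := by
      rw [le_div_iff₀ hy]
      nlinarith
    have h3 : 0 ≤ C * Real.log (1 + C * y) :=
      mul_nonneg hC (Real.log_nonneg (by linarith))
    linarith [mul_le_mul_of_nonneg_left h1 hC]

theorem eta_log_le_quadratic (n : ℕ) (hn : 0 < n) (γ m η z : ℝ)
    (hγ : 0 < γ) (hm : 0 ≤ m) (hη : 0 ≤ η) (hz : 0 ≤ z) :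
    η * Real.log (z + 1) ≤
      (γ / (2 * n)) * Real.exp (-(γ * m)) * z ^ 2 +
        η * (1 + γ * m + Real.log (η + 1) + 2 * n / γ) := by
  have hn' : (0 : ℝ) < n := by exact_mod_cast hn
  have ha : 0 < 2 * n / γ := by positivity
  have hE : 0 < Real.exp (γ * m) := Real.exp_pos _
  have hE1 : 1 ≤ Real.exp (γ * m) := Real.one_le_exp (by positivity)
  -- `y = (2n/γ) exp (γm)` is the choice for which `z² / y` is the quadratic term of the claim.
  have key := mul_log_le_sq_div_add hη hz (mul_pos ha hE)
  have hq : z ^ 2 / (2 * n / γ * Real.exp (γ * m)) =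
      (γ / (2 * n)) * Real.exp (-(γ * m)) * z ^ 2 := by
    rw [Real.exp_neg]
    field_simp
  rw [hq] at key
  have hlog : Real.log (1 + η * (2 * n / γ * Real.exp (γ * m))) ≤
      γ * m + Real.log (η + 1) + 2 * n / γ := by
    generalize 2 * n / γ = a at ha
    have h1 : 1 + η * (a * Real.exp (γ * m)) ≤ (η + 1) * (1 + a) * Real.exp (γ * m) := by
      nlinarith [mul_nonneg hη hE.le, mul_nonneg ha.le hE.le]
    have h2 := Real.log_le_log (by positivity) h1
    rw [Real.log_mul (by positivity) hE.ne', Real.log_mul (by positivity) (by positivity),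
      Real.log_exp] at h2
    linarith [Real.log_le_sub_one_of_pos (show 0 < 1 + a by linarith)]
  have h3 : η * Real.log (1 + η * (2 * n / γ * Real.exp (γ * m))) ≤
      η * (1 + γ * m + Real.log (η + 1) + 2 * n / γ) :=
    mul_le_mul_of_nonneg_left (by linarith) hη
  linarith
end
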